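/- (Bound on E[y^n_k y^n_{k'}], heavy-tail case α > 1/2.) Let φ : ℕ → ℝ with φ_i ≥ 0, φ_0 = 0, ∑_{i=1}^∞ φ_i = 1, and assume there exist K > 0 and α ∈ (1/2, 1) such that N^α ∑_{i=N}^∞ φ_i → K as N → ∞. Set δ = K Γ(1−α)/α, and let (a_n)_{n≥1} satisfy 0 < a_n < 1 and n^α(1−a_n) → λδ for some λ > 0. Let (ε_k)_{k≥0} be iid real random variables with E[ε_0] = 0 and E[ε_0²] = 1, and for each n define y^n_0 = ε_0 and y^n_k = ε_k + ∑_{i=1}^k a_n φ_i y^n_{k−i} for k ≥ 1. Then there exists c > 0 such that for every n ≥ 1 and all k, k' ≥ 0, E[y^n_k y^n_{k'}] ≤ c (1−a_n)^{1/α − 2}. -/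

import Mathlib

open MeasureTheory ProbabilityTheory Filter Set

/-- Convolution powers of a sequence. -/
noncomputable def convPow (φ : ℕ → ℝ) : ℕ → ℕ → ℝ
  | 0 => fun i => if i = 0 then 1 else 0
  | (l + 1) => fun k => ∑ j ∈ Finset.range (k + 1), convPow φ l j * φ (k - j)

/-- ψ^a_i = ∑_{l=0}^∞ a^l (φ^{*l})_i. -/
noncomputable def psiSeq (a : ℝ) (φ : ℕ → ℝ) (i : ℕ) : ℝ :=
  ∑' l : ℕ, a ^ l * convPow φ l i

/-- Fourier transform of a sequence indexed by ℕ. -/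
noncomputable def fourierSeq (f : ℕ → ℝ) (z : ℝ) : ℂ :=
  ∑' k : ℕ, (f k : ℂ) * Complex.exp (-(2 * Real.pi * Complex.I * k * z))

/-- Mittag-Leffler function E_{α,α}. -/
noncomputable def mittagLeffler (α u : ℝ) : ℝ :=
  ∑' k : ℕ, u ^ k / Real.Gamma (α * k + α)

/-- f^{α,λ}. -/
noncomputable def mlDensity (α lam s : ℝ) : ℝ :=
  lam * s ^ (α - 1) * mittagLeffler α (-lam * s ^ α)

/-- F^{α,λ}. -/
noncomputable def mlCDF (α lam x : ℝ) : ℝ :=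
  ∫ s in (0:ℝ)..x, mlDensity α lam s

/-!
Let `ψ = ∑ l, a ^ l φ^{*l}` be the resolvent of `a φ`. The process is `y = ψ * ε`, so by
Cauchy–Schwarz every covariance is at most `∑ k, ψ k ^ 2`. On the Fourier side `ψ̂ (1 - a φ̂) = 1`,
whence `|ψ̂| ≤ (1 - a)⁻¹`; the tail of `φ` forces `1 - Re φ̂ z ≥ c z ^ α`, whence also
`|ψ̂ z| ≤ C z ^ (-α)`, but only for `z` near `0`, since `φ̂` returns to `1` when the support of `φ`
lies in some `d ℕ`, `d ≥ 2`. This is enough: as `ψ ≥ 0`, testing `|ψ̂| ^ 2` against a Fejér weight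
on `[0, e]` already controls `∑ k, ψ k ^ 2` by `∫₀ᵉ |ψ̂| ^ 2`. Splitting that integral at
`(1 - a) ^ (1 / α)`, where the two bounds cross, gives `(1 - a) ^ (1 / α - 2)`; as `1 < 2 α`, the
second part is dominated by its lower end.
-/

open scoped Asymptotics

section Convolution

variable {φ : ℕ → ℝ} {a s : ℝ}

lemma convPow_nonneg (hφ : ∀ i, 0 ≤ φ i) (l i : ℕ) : 0 ≤ convPow φ l i := by
  induction l generalizing i with
  | zero =>
    unfold convPow
    positivity
  | succ l ih => exact Finset.sum_nonneg fun j _ => mul_nonneg (ih j) (hφ _)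

lemma hasSum_convPow (hs : HasSum φ s) (l : ℕ) :
    HasSum (convPow φ l) (s ^ l) := by
  induction l with
  | zero =>
    rw [pow_zero]
    exact hasSum_ite_eq 0 1
  | succ l ih =>
    rw [pow_succ, ← ih.tsum_eq, ← hs.tsum_eq]
    exact hasSum_sum_range_mul_of_summable_norm ih.summable.norm hs.summable.norm

lemma summable_pow_mul_convPow (hφ : ∀ i, 0 ≤ φ i) (hs : HasSum φ s) (ha : 0 ≤ a)
    (has : a * s < 1) : Summable fun p : ℕ × ℕ => a ^ p.1 * convPow φ p.1 p.2 := by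
  have hrow (l : ℕ) : HasSum (fun i => a ^ l * convPow φ l i) ((a * s) ^ l) := by
    simpa only [mul_pow] using (hasSum_convPow hs l).mul_left (a ^ l)
  refine (summable_prod_of_nonneg fun p =>
    mul_nonneg (pow_nonneg ha _) (convPow_nonneg hφ _ _)).2 ⟨fun l => (hrow l).summable, ?_⟩
  simp only [(hrow _).tsum_eq]
  exact summable_geometric_of_lt_one (mul_nonneg ha (hs.nonneg hφ)) has

lemma psiSeq_nonneg (hφ : ∀ i, 0 ≤ φ i) (ha : 0 ≤ a) (i : ℕ) : 0 ≤ psiSeq a φ i :=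
  tsum_nonneg fun l => mul_nonneg (pow_nonneg ha l) (convPow_nonneg hφ l i)

lemma summable_psiSeq (hφ : ∀ i, 0 ≤ φ i) (hs : HasSum φ s) (ha : 0 ≤ a) (has : a * s < 1) :
    Summable (psiSeq a φ) :=
  (summable_pow_mul_convPow hφ hs ha has).prod_symm.prod

lemma psiSeq_eq_ite_add_conv (hφ : ∀ i, 0 ≤ φ i) (hs : HasSum φ s) (ha : 0 ≤ a)
    (has : a * s < 1) (n : ℕ) :
    psiSeq a φ n = (if n = 0 then 1 else 0) +
      a * ∑ j ∈ Finset.range (n + 1), psiSeq a φ j * φ (n - j) := by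
  have hcol (i : ℕ) : Summable fun l => a ^ l * convPow φ l i :=
    (summable_pow_mul_convPow hφ hs ha has).prod_symm.prod_factor i
  calc psiSeq a φ n
      = convPow φ 0 n + ∑' l, a ^ (l + 1) * convPow φ (l + 1) n := by
        rw [psiSeq, (hcol n).tsum_eq_zero_add, pow_zero, one_mul]
    _ = convPow φ 0 n +
          ∑' l, ∑ j ∈ Finset.range (n + 1), a * (a ^ l * convPow φ l j * φ (n - j)) := by
        congr 1
        refine tsum_congr fun l => ?_
        rw [convPow, Finset.mul_sum]
        exact Finset.sum_congr rfl fun j _ => by ring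
    _ = _ := by
        rw [Summable.tsum_finsetSum fun j _ => ((hcol j).mul_right _).mul_left a, Finset.mul_sum]
        simp only [tsum_mul_left, tsum_mul_right, psiSeq, convPow]

lemma mk_psiSeq_mul_one_sub (hφ : ∀ i, 0 ≤ φ i) (hs : HasSum φ s) (ha : 0 ≤ a)
    (has : a * s < 1) :
    PowerSeries.mk (psiSeq a φ) * (1 - PowerSeries.C a * PowerSeries.mk φ) = 1 := by
  rw [mul_sub, mul_one, mul_left_comm, sub_eq_iff_eq_add]
  ext n
  rw [map_add, PowerSeries.coeff_mk, PowerSeries.coeff_one, PowerSeries.coeff_C_mul,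
    PowerSeries.coeff_mul, psiSeq_eq_ite_add_conv hφ hs ha has n]
  simp only [PowerSeries.coeff_mk,
    Finset.Nat.sum_antidiagonal_eq_sum_range_succ fun i j => psiSeq a φ i * φ j]

lemma eq_sum_psiSeq_of_autoregression (hφ : ∀ i, 0 ≤ φ i) (hφ0 : φ 0 = 0) (hs : HasSum φ s)
    (ha : 0 ≤ a) (has : a * s < 1) {x y : ℕ → ℝ} (hy0 : y 0 = x 0)
    (hy : ∀ k, 1 ≤ k → y k = x k + ∑ i ∈ Finset.Icc 1 k, a * φ i * y (k - i)) (k : ℕ) :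
    y k = ∑ j ∈ Finset.range (k + 1), psiSeq a φ j * x (k - j) := by
  have hrec (k : ℕ) : y k = x k + a * ∑ i ∈ Finset.range (k + 1), φ i * y (k - i) := by
    rcases k.eq_zero_or_pos with rfl | hk
    · simp [hy0, hφ0]
    · rw [hy k hk, Finset.range_eq_Ico, Finset.sum_eq_sum_Ico_succ_bot k.add_one_pos, hφ0, zero_mul,
        zero_add, zero_add, Finset.Ico_add_one_right_eq_Icc, Finset.mul_sum]
      simp only [mul_assoc]
  have hmk : (1 - PowerSeries.C a * PowerSeries.mk φ) * PowerSeries.mk y = PowerSeries.mk x := by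
    rw [sub_mul, one_mul, mul_assoc, sub_eq_iff_eq_add]
    ext n
    rw [map_add, PowerSeries.coeff_C_mul, PowerSeries.coeff_mul]
    simpa only [PowerSeries.coeff_mk,
      Finset.Nat.sum_antidiagonal_eq_sum_range_succ fun i j => φ i * y j] using hrec n
  have hinv : PowerSeries.mk y = PowerSeries.mk (psiSeq a φ) * PowerSeries.mk x := by
    rw [← hmk, ← mul_assoc, mk_psiSeq_mul_one_sub hφ hs ha has, one_mul]
  simpa only [PowerSeries.coeff_mk, PowerSeries.coeff_mul,
    Finset.Nat.sum_antidiagonal_eq_sum_range_succ fun i j => psiSeq a φ i * x j]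
    using congrArg (PowerSeries.coeff k) hinv

end Convolution

section Fourier

variable {f g : ℕ → ℝ} {a s : ℝ}

lemma norm_ofReal_mul_exp_mul_I (x t : ℝ) :
    ‖(x : ℂ) * Complex.exp (t * Complex.I)‖ = ‖x‖ := by
  rw [norm_mul, Complex.norm_exp_ofReal_mul_I, mul_one, Complex.norm_real]

lemma summable_norm_mul_exp_mul_I (hf : Summable f) (t : ℕ → ℝ) :
    Summable fun k => ‖(f k : ℂ) * Complex.exp (t k * Complex.I)‖ := by
  simpa only [norm_ofReal_mul_exp_mul_I] using hf.norm

lemma fourierSeq_eq_tsum_exp_mul_I (f : ℕ → ℝ) (z : ℝ) :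
    fourierSeq f z =
      ∑' k : ℕ, (f k : ℂ) * Complex.exp ((-(2 * Real.pi * k * z) : ℝ) * Complex.I) := by
  refine tsum_congr fun k => ?_
  congr 2
  push_cast
  ring

lemma hasSum_fourierSeq (hf : Summable f) (z : ℝ) :
    HasSum (fun k : ℕ => (f k : ℂ) * Complex.exp ((-(2 * Real.pi * k * z) : ℝ) * Complex.I))
      (fourierSeq f z) := by
  rw [fourierSeq_eq_tsum_exp_mul_I]
  exact (summable_norm_mul_exp_mul_I hf fun k => -(2 * Real.pi * k * z)).of_norm.hasSum

lemma continuous_fourierSeq (hf : Summable f) : Continuous (fourierSeq f) := by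
  rw [funext (fourierSeq_eq_tsum_exp_mul_I f)]
  exact continuous_tsum (fun k => by fun_prop) hf.norm
    fun k z => (norm_ofReal_mul_exp_mul_I _ _).le

lemma norm_fourierSeq_le (hf : ∀ k, 0 ≤ f k) (hs : HasSum f s) (z : ℝ) :
    ‖fourierSeq f z‖ ≤ s := by
  rw [fourierSeq_eq_tsum_exp_mul_I]
  exact tsum_of_norm_bounded hs fun k =>
    (norm_ofReal_mul_exp_mul_I _ _).le.trans (Real.norm_of_nonneg (hf k)).le

lemma hasSum_re_fourierSeq (hf : Summable f) (z : ℝ) :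
    HasSum (fun k : ℕ => f k * Real.cos (2 * Real.pi * k * z)) (fourierSeq f z).re := by
  simpa only [Complex.re_ofReal_mul, Complex.exp_ofReal_mul_I_re, Real.cos_neg]
    using Complex.hasSum_re (hasSum_fourierSeq hf z)

lemma hasSum_fourierSeq_mul (hf : Summable f) (hg : Summable g) (z : ℝ) :
    HasSum (fun n : ℕ => ((∑ j ∈ Finset.range (n + 1), f j * g (n - j) : ℝ) : ℂ) *
        Complex.exp ((-(2 * Real.pi * n * z) : ℝ) * Complex.I))
      (fourierSeq f z * fourierSeq g z) := by
  have h := hasSum_sum_range_mul_of_summable_norm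
    (summable_norm_mul_exp_mul_I hf fun k => -(2 * Real.pi * k * z))
    (summable_norm_mul_exp_mul_I hg fun k => -(2 * Real.pi * k * z))
  rw [← fourierSeq_eq_tsum_exp_mul_I, ← fourierSeq_eq_tsum_exp_mul_I] at h
  refine h.congr_fun fun n => ?_
  rw [Complex.ofReal_sum, Finset.sum_mul]
  refine Finset.sum_congr rfl fun j hj => ?_
  have hjn : j ≤ n := Nat.lt_succ_iff.1 (Finset.mem_range.1 hj)
  rw [mul_mul_mul_comm, ← Complex.exp_add, Complex.ofReal_mul, Nat.cast_sub hjn]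
  congr 2
  push_cast
  ring

lemma fourierSeq_psiSeq_mul_one_sub (hf : ∀ i, 0 ≤ f i) (hs : HasSum f s) (ha : 0 ≤ a)
    (has : a * s < 1) (z : ℝ) :
    fourierSeq (psiSeq a f) z * (1 - a * fourierSeq f z) = 1 := by
  have hψ := summable_psiSeq hf hs ha has
  have hsum := (hasSum_ite_eq (0 : ℕ) (1 : ℂ)).add
    ((hasSum_fourierSeq_mul hψ hs.summable z).mul_left (a : ℂ))
  have hrenewal := (hasSum_fourierSeq hψ z).unique <| hsum.congr_fun fun n => by
    rw [psiSeq_eq_ite_add_conv hf hs ha has n]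
    rcases eq_or_ne n 0 with rfl | hn
    · simp
    · simp [hn, mul_assoc]
  linear_combination hrenewal

end Fourier

section LocalizedBessel

lemma integral_fejer_mul_cos_nonneg {e : ℝ} (he : 0 < e) (m : ℝ) :
    0 ≤ ∫ z in (0 : ℝ)..e, (1 - z / e) * Real.cos (m * z) := by
  rcases eq_or_ne m 0 with rfl | hm
  · refine intervalIntegral.integral_nonneg he.le fun z hz => ?_
    rw [zero_mul, Real.cos_zero, mul_one, sub_nonneg]
    exact (div_le_one he).2 hz.2
  · have hderiv (z : ℝ) : HasDerivAt
        (fun z => (1 - z / e) * (Real.sin (m * z) / m) - Real.cos (m * z) / (m ^ 2 * e))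
        ((1 - z / e) * Real.cos (m * z)) z := by
      have hmul : HasDerivAt (fun z : ℝ => m * z) m z := by
        simpa using (hasDerivAt_id z).const_mul m
      refine (((((hasDerivAt_id z).div_const e).const_sub 1).mul (hmul.sin.div_const m)).sub
        (hmul.cos.div_const (m ^ 2 * e))).congr_deriv ?_
      simp only [id_eq]
      field_simp
      ring
    have hvalue : ∫ z in (0 : ℝ)..e, (1 - z / e) * Real.cos (m * z) =
        (1 - Real.cos (m * e)) / (m ^ 2 * e) := by
      rw [intervalIntegral.integral_eq_sub_of_hasDerivAt (fun z _ => hderiv z)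
        (Continuous.intervalIntegrable (by fun_prop) _ _), div_self he.ne']
      simp only [mul_zero, Real.sin_zero, Real.cos_zero]
      ring
    rw [hvalue]
    exact div_nonneg (sub_nonneg.2 (Real.cos_le_one _)) (by positivity)

lemma integral_fejer {e : ℝ} (he : 0 < e) : ∫ z in (0 : ℝ)..e, (1 - z / e) = e / 2 := by
  rw [intervalIntegral.integral_sub (by simp) (Continuous.intervalIntegrable (by fun_prop) _ _),
    intervalIntegral.integral_div, integral_id, intervalIntegral.integral_const, smul_eq_mul]
  field_simp
  ring

variable {p : ℕ → ℝ}

lemma hasSum_norm_fourierSeq_sq (hp : Summable p) (z : ℝ) :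
    HasSum (fun q : ℕ × ℕ => p q.1 * p q.2 * Real.cos (2 * Real.pi * ((q.1 : ℝ) - q.2) * z))
      (‖fourierSeq p z‖ ^ 2) := by
  have hterm := summable_norm_mul_exp_mul_I hp fun k => -(2 * Real.pi * k * z)
  have hconj : Summable fun k : ℕ => ‖starRingEnd ℂ
      ((p k : ℂ) * Complex.exp ((-(2 * Real.pi * k * z) : ℝ) * Complex.I))‖ := by
    simpa only [RCLike.norm_conj] using hterm
  have h := Complex.hasSum_re ((hasSum_fourierSeq hp z).mul
    (Complex.hasSum_conj'.2 (hasSum_fourierSeq hp z)) (hterm.mul_norm hconj).of_norm)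
  rw [Complex.mul_conj', ← Complex.ofReal_pow, Complex.ofReal_re] at h
  refine h.congr_fun fun q => ?_
  rw [map_mul, Complex.conj_ofReal, ← Complex.exp_conj, map_mul, Complex.conj_ofReal,
    Complex.conj_I, mul_mul_mul_comm, ← Complex.ofReal_mul, ← Complex.exp_add,
    Complex.re_ofReal_mul, mul_neg, ← sub_eq_add_neg, ← sub_mul, ← Complex.ofReal_sub,
    Complex.exp_ofReal_mul_I_re, ← Real.cos_neg]
  congr 2
  ring

lemma hasSum_integral_fejer_mul_norm_fourierSeq_sq (hp : Summable p) {e : ℝ} (he : 0 < e) :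
    HasSum (fun q : ℕ × ℕ => p q.1 * p q.2 *
        ∫ z in (0 : ℝ)..e, (1 - z / e) * Real.cos (2 * Real.pi * ((q.1 : ℝ) - q.2) * z))
      (∫ z in (0 : ℝ)..e, (1 - z / e) * ‖fourierSeq p z‖ ^ 2) := by
  simp only [← intervalIntegral.integral_const_mul]
  refine intervalIntegral.hasSum_integral_of_dominated_convergence
    (fun q _ => ‖p q.1 * p q.2‖) (fun q => Continuous.aestronglyMeasurable (by fun_prop))
    (fun q => Eventually.of_forall fun z hz => ?_)
    (Eventually.of_forall fun z _ => hp.norm.mul_norm hp.norm) (by simp)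
    (Eventually.of_forall fun z _ => ?_)
  · rw [uIoc_of_le he.le] at hz
    have hz0 : 0 ≤ z / e := div_nonneg hz.1.le he.le
    have hz1 : z / e ≤ 1 := (div_le_one he).2 hz.2
    rw [norm_mul]
    refine mul_le_of_le_one_right (norm_nonneg _) ?_
    rw [norm_mul, Real.norm_of_nonneg (sub_nonneg.2 hz1)]
    exact mul_le_one₀ (by linarith) (norm_nonneg _) (Real.abs_cos_le_one _)
  · refine ((hasSum_norm_fourierSeq_sq hp z).mul_left (1 - z / e)).congr_fun fun q => ?_
    ring

/- The Fejér weight `1 - z / e` has nonnegative cosine transform, so for a nonnegative sequence the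
off-diagonal terms of the weighted square can be discarded. -/
lemma sum_sq_le_integral_norm_fourierSeq_sq (hp0 : ∀ k, 0 ≤ p k) (hp : Summable p) {e : ℝ}
    (he : 0 < e) (s : Finset ℕ) :
    e / 2 * ∑ k ∈ s, p k ^ 2 ≤ ∫ z in (0 : ℝ)..e, ‖fourierSeq p z‖ ^ 2 := by
  have hcont := continuous_fourierSeq hp
  calc e / 2 * ∑ k ∈ s, p k ^ 2
      = ∑ q ∈ s.diag, p q.1 * p q.2 *
          ∫ z in (0 : ℝ)..e, (1 - z / e) * Real.cos (2 * Real.pi * ((q.1 : ℝ) - q.2) * z) := by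
        rw [Finset.sum_diag, Finset.mul_sum]
        refine Finset.sum_congr rfl fun k _ => ?_
        simp only [sub_self, mul_zero, zero_mul, Real.cos_zero, mul_one, integral_fejer he]
        ring
    _ ≤ ∫ z in (0 : ℝ)..e, (1 - z / e) * ‖fourierSeq p z‖ ^ 2 :=
        sum_le_hasSum _ (fun q _ => mul_nonneg (mul_nonneg (hp0 _) (hp0 _))
          (integral_fejer_mul_cos_nonneg he _)) (hasSum_integral_fejer_mul_norm_fourierSeq_sq hp he)
    _ ≤ ∫ z in (0 : ℝ)..e, ‖fourierSeq p z‖ ^ 2 := by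
        refine intervalIntegral.integral_mono_on he.le
          (Continuous.intervalIntegrable (by fun_prop) _ _)
          (Continuous.intervalIntegrable (by fun_prop) _ _) fun z hz => ?_
        exact mul_le_of_le_one_left (sq_nonneg _) (sub_le_self _ (div_nonneg hz.1 he.le))

end LocalizedBessel

section TailAsymptotics

lemma isTheta_rpow_neg_of_tendsto_rpow_mul {f : ℕ → ℝ} {K α : ℝ} (hK : K ≠ 0)
    (hf : Tendsto (fun N : ℕ => (N : ℝ) ^ α * f N) atTop (nhds K)) :
    f =Θ[atTop] fun N : ℕ => (N : ℝ) ^ (-α) := by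
  refine (Asymptotics.isTheta_of_div_tendsto_nhds_ne_zero (hf.congr fun N => ?_) hK).symm
  rw [Real.rpow_neg N.cast_nonneg, div_inv_eq_mul, mul_comm]

variable {φ : ℕ → ℝ} {α s : ℝ}

lemma sum_Ico_eq_tsum_sub_tsum (hs : Summable φ) {m n : ℕ} (hmn : m ≤ n) :
    ∑ j ∈ Finset.Ico m n, φ j = ∑' i, φ (m + i) - ∑' i, φ (n + i) := by
  have hm := hs.sum_add_tsum_nat_add m
  have hn := hs.sum_add_tsum_nat_add n
  rw [Finset.sum_Ico_eq_sub _ hmn]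
  simp only [add_comm m, add_comm n]
  linarith

lemma exists_mul_rpow_le_sum_Ico (hφ : ∀ i, 0 ≤ φ i) (hs : Summable φ) (hα : 0 < α)
    (htail : (fun N : ℕ => ∑' i, φ (N + i)) =Θ[atTop] fun N : ℕ => (N : ℝ) ^ (-α)) :
    ∃ M : ℕ, 0 < M ∧ ∃ c > 0, ∀ᶠ N : ℕ in atTop,
      c * (N : ℝ) ^ (-α) ≤ ∑ j ∈ Finset.Ico N (M * N), φ j := by
  obtain ⟨C, hC, hupper⟩ := htail.isBigO.exists_pos
  obtain ⟨D, hD, hlower⟩ := htail.isBigO_symm.exists_pos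
  have htail_nonneg (N : ℕ) : 0 ≤ ∑' i, φ (N + i) := tsum_nonneg fun i => hφ _
  have hdecay : ∀ᶠ M : ℕ in atTop, (M : ℝ) ^ (-α) < 1 / (2 * C * D) :=
    ((tendsto_rpow_neg_atTop hα).comp tendsto_natCast_atTop_atTop).eventually_lt_const
      (by positivity)
  obtain ⟨M, hMdecay, hM⟩ := (hdecay.and (eventually_gt_atTop 0)).exists
  refine ⟨M, hM, 1 / (2 * D), by positivity, ?_⟩
  filter_upwards [hlower.bound, (tendsto_id.const_mul_atTop' hM).eventually hupper.bound]
    with N hN hMN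
  have hNα : 0 ≤ (N : ℝ) ^ (-α) := by positivity
  rw [Real.norm_of_nonneg hNα, Real.norm_of_nonneg (htail_nonneg _)] at hN
  rw [id_eq, Real.norm_of_nonneg (htail_nonneg _), Nat.cast_mul,
    Real.mul_rpow M.cast_nonneg N.cast_nonneg, Real.norm_of_nonneg (by positivity)] at hMN
  have hfar : ∑' i, φ (M * N + i) ≤ 1 / (2 * D) * (N : ℝ) ^ (-α) :=
    calc _ ≤ C * ((M : ℝ) ^ (-α) * (N : ℝ) ^ (-α)) := hMN
      _ ≤ C * (1 / (2 * C * D) * (N : ℝ) ^ (-α)) := by gcongr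
      _ = 1 / (2 * D) * (N : ℝ) ^ (-α) := by field_simp
  have hnear : 1 / D * (N : ℝ) ^ (-α) ≤ ∑' i, φ (N + i) := by
    rwa [one_div, inv_mul_le_iff₀ hD]
  rw [sum_Ico_eq_tsum_sub_tsum hs (Nat.le_mul_of_pos_left N hM)]
  calc 1 / (2 * D) * (N : ℝ) ^ (-α)
      = 1 / D * (N : ℝ) ^ (-α) - 1 / (2 * D) * (N : ℝ) ^ (-α) := by field_simp; norm_num
    _ ≤ _ := sub_le_sub hnear hfar

lemma eight_mul_sq_mul_sum_le_sub_re_fourierSeq (hφ : ∀ i, 0 ≤ φ i) (hs : HasSum φ s) {u z : ℝ}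
    (hu : 0 ≤ u) (t : Finset ℕ) (ht : ∀ j ∈ t, u ≤ j * z ∧ j * z ≤ 1 / 2) :
    8 * u ^ 2 * ∑ j ∈ t, φ j ≤ s - (fourierSeq φ z).re := by
  have hsub := hs.sub (hasSum_re_fourierSeq hs.summable z)
  have hcos {x : ℝ} (hux : u ≤ x) (hx : x ≤ 1 / 2) :
      8 * u ^ 2 ≤ 1 - Real.cos (2 * Real.pi * x) := by
    have habs : |2 * Real.pi * x| ≤ Real.pi := by
      rw [abs_of_nonneg (mul_nonneg Real.two_pi_pos.le (hu.trans hux))]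
      nlinarith [Real.pi_pos]
    have hjordan := Real.cos_le_one_sub_mul_cos_sq habs
    have hscale : 2 / Real.pi ^ 2 * (2 * Real.pi * x) ^ 2 = 8 * x ^ 2 := by
      field_simp
      ring
    nlinarith
  rw [Finset.mul_sum]
  refine le_trans (Finset.sum_le_sum fun j hj => ?_) (sum_le_hasSum t (fun j _ => ?_) hsub)
  · have := mul_le_mul_of_nonneg_right (hcos (ht j hj).1 (ht j hj).2) (hφ j)
    rw [← mul_assoc] at this
    linarith
  · exact sub_nonneg.2 (mul_le_of_le_one_right (hφ j) (Real.cos_le_one _))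

lemma half_le_floor_div_mul {r z : ℝ} (hz : 0 < z) (hzr : z ≤ r) : r / 2 ≤ ⌊r / z⌋₊ * z := by
  have hlt : r < (⌊r / z⌋₊ + 1) * z := (div_lt_iff₀ hz).1 (Nat.lt_floor_add_one _)
  have hone : (1 : ℝ) ≤ ⌊r / z⌋₊ :=
    Nat.one_le_cast.2 ((Nat.one_le_floor_iff _).2 ((one_le_div hz).2 hzr))
  nlinarith

/- At frequency `z` the window `[N, M * N)`, `N = ⌊1 / (2 * M * z)⌋`, consists of indices `j` for
which `2 * π * j * z` lies in `(0, π]`, bounded away from `0`. -/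
lemma exists_mul_rpow_le_sub_re_fourierSeq (hφ : ∀ i, 0 ≤ φ i) (hs : HasSum φ s) (hα : 0 < α)
    (htail : (fun N : ℕ => ∑' i, φ (N + i)) =Θ[atTop] fun N : ℕ => (N : ℝ) ^ (-α)) :
    ∃ c > 0, ∀ᶠ z : ℝ in nhdsWithin 0 (Ioi 0), c * z ^ α ≤ s - (fourierSeq φ z).re := by
  obtain ⟨M, hM, c, hc, hmass⟩ := exists_mul_rpow_le_sum_Ico hφ hs.summable hα htail
  obtain ⟨r, hr⟩ : ∃ r : ℝ, r = 1 / (2 * M) := ⟨_, rfl⟩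
  have hr0 : 0 < r := by rw [hr]; positivity
  have hscale : Tendsto (fun z : ℝ => r / z) (nhdsWithin 0 (Ioi 0)) atTop :=
    tendsto_inv_nhdsGT_zero.const_mul_atTop hr0
  refine ⟨8 * (r / 2) ^ 2 * c * r ^ (-α), by positivity, ?_⟩
  filter_upwards [(tendsto_nat_floor_atTop.comp hscale).eventually hmass,
    Ioc_mem_nhdsGT hr0] with z hN ⟨hz, hzr⟩
  simp only [Function.comp_apply] at hN
  have hN_pos : 0 < ⌊r / z⌋₊ := Nat.floor_pos.2 ((one_le_div hz).2 hzr)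
  have hNz_ge := half_le_floor_div_mul hz hzr
  have hN_le : ⌊r / z⌋₊ ≤ r / z := Nat.floor_le (by positivity)
  generalize ⌊r / z⌋₊ = N at hN hN_pos hNz_ge hN_le
  have hzα : r ^ (-α) * z ^ α ≤ (N : ℝ) ^ (-α) :=
    calc r ^ (-α) * z ^ α = (r / z) ^ (-α) := by
          rw [Real.div_rpow hr0.le hz.le, Real.rpow_neg hz.le, div_inv_eq_mul]
      _ ≤ (N : ℝ) ^ (-α) :=
          Real.rpow_le_rpow_of_nonpos (Nat.cast_pos.2 hN_pos) hN_le (neg_nonpos.2 hα.le)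
  calc 8 * (r / 2) ^ 2 * c * r ^ (-α) * z ^ α
      = 8 * (r / 2) ^ 2 * (c * (r ^ (-α) * z ^ α)) := by ring
    _ ≤ 8 * (r / 2) ^ 2 * (c * (N : ℝ) ^ (-α)) := by gcongr
    _ ≤ 8 * (r / 2) ^ 2 * ∑ j ∈ Finset.Ico N (M * N), φ j := by gcongr
    _ ≤ s - (fourierSeq φ z).re := by
      refine eight_mul_sq_mul_sum_le_sub_re_fourierSeq hφ hs (by positivity) _ fun j hj => ?_
      obtain ⟨hNj, hjMN⟩ := Finset.mem_Ico.1 hj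
      have hj_le : (j : ℝ) ≤ M * N := mod_cast hjMN.le
      refine ⟨hNz_ge.trans (by gcongr), ?_⟩
      calc j * z ≤ M * (r / z) * z := by gcongr; exact hj_le.trans (by gcongr)
        _ = 1 / 2 := by rw [hr]; field_simp

end TailAsymptotics

section Resolvent

variable {φ : ℕ → ℝ} {a α : ℝ}

lemma one_sub_re_le_two_mul_norm_one_sub_mul {w : ℂ} (hw : ‖w‖ ≤ 1) (ha0 : 0 ≤ a) (ha1 : a ≤ 1) :
    1 - w.re ≤ 2 * ‖1 - a * w‖ := by
  obtain ⟨hre₁, hre₂⟩ := abs_le.1 ((Complex.abs_re_le_norm w).trans hw)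
  have hre : 1 - a * w.re ≤ ‖1 - a * w‖ := by
    simpa using Complex.re_le_norm (1 - a * w)
  nlinarith

lemma norm_fourierSeq_psiSeq {s : ℝ} (hφ : ∀ i, 0 ≤ φ i) (hs : HasSum φ s) (ha : 0 ≤ a)
    (has : a * s < 1) (z : ℝ) :
    ‖fourierSeq (psiSeq a φ) z‖ = ‖1 - a * fourierSeq φ z‖⁻¹ := by
  rw [eq_inv_of_mul_eq_one_left (fourierSeq_psiSeq_mul_one_sub hφ hs ha has z), norm_inv]

lemma norm_fourierSeq_psiSeq_le_inv {s : ℝ} (hφ : ∀ i, 0 ≤ φ i) (hs : HasSum φ s) (ha : 0 ≤ a)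
    (has : a * s < 1) (z : ℝ) : ‖fourierSeq (psiSeq a φ) z‖ ≤ (1 - a * s)⁻¹ := by
  rw [norm_fourierSeq_psiSeq hφ hs ha has]
  refine inv_anti₀ (sub_pos.2 has) ?_
  calc 1 - a * s ≤ ‖(1 : ℂ)‖ - ‖a * fourierSeq φ z‖ := by
        rw [norm_one, norm_mul, Complex.norm_real, Real.norm_of_nonneg ha]
        gcongr
        exact norm_fourierSeq_le hφ hs z
    _ ≤ _ := norm_sub_norm_le _ _

lemma exists_norm_fourierSeq_psiSeq_le_rpow (hφ : ∀ i, 0 ≤ φ i) (hs : HasSum φ 1) (hα : 0 < α)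
    (htail : (fun N : ℕ => ∑' i, φ (N + i)) =Θ[atTop] fun N : ℕ => (N : ℝ) ^ (-α)) :
    ∃ e > 0, ∃ C > 0, ∀ a, 0 ≤ a → a < 1 → ∀ z ∈ Ioo 0 e,
      ‖fourierSeq (psiSeq a φ) z‖ ≤ C * z ^ (-α) := by
  obtain ⟨c, hc, hev⟩ := exists_mul_rpow_le_sub_re_fourierSeq hφ hs hα htail
  obtain ⟨e, he, hbound⟩ := mem_nhdsGT_iff_exists_Ioo_subset.1 hev
  refine ⟨e, he, 2 / c, by positivity, fun a ha0 ha1 z hz => ?_⟩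
  have hz0 : 0 < z := hz.1
  have hsymbol : c / 2 * z ^ α ≤ ‖1 - a * fourierSeq φ z‖ := by
    have hlow : c * z ^ α ≤ 1 - (fourierSeq φ z).re := hbound hz
    have hnorm := one_sub_re_le_two_mul_norm_one_sub_mul (norm_fourierSeq_le hφ hs z) ha0 ha1.le
    linarith
  calc ‖fourierSeq (psiSeq a φ) z‖
      = ‖1 - a * fourierSeq φ z‖⁻¹ := norm_fourierSeq_psiSeq hφ hs ha0 (by rwa [mul_one]) z
    _ ≤ (c / 2 * z ^ α)⁻¹ := inv_anti₀ (by positivity) hsymbol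
    _ = 2 / c * z ^ (-α) := by rw [mul_inv, inv_div, Real.rpow_neg hz0.le]

lemma integral_le_of_le_of_le_rpow {f : ℝ → ℝ} {e B C t β : ℝ} (he : 0 ≤ e)
    (hf : IntervalIntegrable f volume 0 e) (hB : 0 ≤ B) (hC : 0 ≤ C) (ht : 0 < t) (hβ : 1 < β)
    (hfB : ∀ z ∈ Ioo 0 e, f z ≤ B) (hfC : ∀ z ∈ Ioo 0 e, f z ≤ C * z ^ (-β)) :
    ∫ z in (0 : ℝ)..e, f z ≤ B * t + C / (β - 1) * t ^ (1 - β) := by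
  have hhead {r : ℝ} (hr0 : 0 ≤ r) (hre : r ≤ e) (hrt : r ≤ t) :
      ∫ z in (0 : ℝ)..r, f z ≤ B * t := by
    calc ∫ z in (0 : ℝ)..r, f z ≤ ∫ _ in (0 : ℝ)..r, B :=
          intervalIntegral.integral_mono_on_of_le_Ioo hr0
            (hf.mono_set (uIcc_subset_uIcc_left (mem_uIcc_of_le hr0 hre))) (by simp)
            fun z hz => hfB z ⟨hz.1, hz.2.trans_le hre⟩
      _ = B * r := by simp [mul_comm]
      _ ≤ B * t := by gcongr
  have hbound_nonneg : 0 ≤ C / (β - 1) * t ^ (1 - β) :=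
    mul_nonneg (div_nonneg hC (sub_nonneg.2 hβ.le)) (Real.rpow_nonneg ht.le _)
  rcases le_total e t with het | hte
  · exact (hhead he le_rfl het).trans (le_add_of_nonneg_right hbound_nonneg)
  have h0 : (0 : ℝ) ∉ uIcc t e := by
    rw [uIcc_of_le hte]
    exact fun h => ht.not_ge h.1
  have htmem := mem_uIcc_of_le ht.le hte
  have hf_tail := hf.mono_set (uIcc_subset_uIcc_right htmem)
  have htail : ∫ z in t..e, f z ≤ C / (β - 1) * t ^ (1 - β) := by
    calc ∫ z in t..e, f z ≤ ∫ z in t..e, C * z ^ (-β) :=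
          intervalIntegral.integral_mono_on_of_le_Ioo hte hf_tail
            ((intervalIntegral.intervalIntegrable_rpow (Or.inr h0)).const_mul C)
            fun z hz => hfC z ⟨ht.trans hz.1, hz.2⟩
      _ = C / (β - 1) * (t ^ (1 - β) - e ^ (1 - β)) := by
          rw [intervalIntegral.integral_const_mul,
            integral_rpow (Or.inr ⟨by linarith, h0⟩), neg_add_eq_sub, ← neg_sub β 1, div_neg]
          ring
      _ ≤ C / (β - 1) * t ^ (1 - β) := by
          exact mul_le_mul_of_nonneg_left (sub_le_self _ (Real.rpow_nonneg he _))
            (div_nonneg hC (sub_nonneg.2 hβ.le))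
  rw [← intervalIntegral.integral_add_adjacent_intervals
    (hf.mono_set (uIcc_subset_uIcc_left htmem)) hf_tail]
  exact add_le_add (hhead ht.le hte le_rfl) htail

lemma exists_integral_norm_fourierSeq_psiSeq_sq_le (hφ : ∀ i, 0 ≤ φ i) (hs : HasSum φ 1)
    (hα : 1 / 2 < α)
    (htail : (fun N : ℕ => ∑' i, φ (N + i)) =Θ[atTop] fun N : ℕ => (N : ℝ) ^ (-α)) :
    ∃ e > 0, ∃ c > 0, ∀ a, 0 ≤ a → a < 1 →
      ∫ z in (0 : ℝ)..e, ‖fourierSeq (psiSeq a φ) z‖ ^ 2 ≤ c * (1 - a) ^ (1 / α - 2) := by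
  have hα0 : 0 < α := by linarith
  have h2α : 0 < 2 * α - 1 := by linarith
  obtain ⟨e, he, C, hC, hdecay⟩ := exists_norm_fourierSeq_psiSeq_le_rpow hφ hs hα0 htail
  refine ⟨e, he, 1 + C ^ 2 / (2 * α - 1), by positivity, fun a ha0 ha1 => ?_⟩
  have has : a * 1 < 1 := by rwa [mul_one]
  have hb : 0 < 1 - a := sub_pos.2 ha1
  have hcont := continuous_fourierSeq (summable_psiSeq hφ hs ha0 has)
  have hbound (z : ℝ) : ‖fourierSeq (psiSeq a φ) z‖ ≤ (1 - a)⁻¹ := by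
    simpa only [mul_one] using norm_fourierSeq_psiSeq_le_inv hφ hs ha0 has z
  have hdecay_sq : ∀ z ∈ Ioo 0 e,
      ‖fourierSeq (psiSeq a φ) z‖ ^ 2 ≤ C ^ 2 * z ^ (-(2 * α)) := fun z hz =>
    calc ‖fourierSeq (psiSeq a φ) z‖ ^ 2 ≤ (C * z ^ (-α)) ^ 2 := by
          gcongr
          exact hdecay a ha0 ha1 z hz
      _ = C ^ 2 * z ^ (-(2 * α)) := by
          rw [mul_pow, ← Real.rpow_mul_natCast hz.1.le, Nat.cast_ofNat, neg_mul, mul_comm α]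
  have hhead : (1 - a)⁻¹ ^ 2 * (1 - a) ^ (1 / α) = (1 - a) ^ (1 / α - 2) := by
    rw [Real.rpow_sub hb, Real.rpow_two, inv_pow, mul_comm, ← div_eq_mul_inv]
  have htail_exp : ((1 - a) ^ (1 / α)) ^ (1 - 2 * α) = (1 - a) ^ (1 / α - 2) := by
    rw [← Real.rpow_mul hb.le]
    congr 1
    field_simp
  calc ∫ z in (0 : ℝ)..e, ‖fourierSeq (psiSeq a φ) z‖ ^ 2
      ≤ (1 - a)⁻¹ ^ 2 * (1 - a) ^ (1 / α) +
          C ^ 2 / (2 * α - 1) * ((1 - a) ^ (1 / α)) ^ (1 - 2 * α) :=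
        integral_le_of_le_of_le_rpow he.le (Continuous.intervalIntegrable (by fun_prop) _ _)
          (by positivity) (by positivity) (by positivity) (by linarith)
          (fun z _ => pow_le_pow_left₀ (norm_nonneg _) (hbound z) 2) hdecay_sq
    _ = (1 + C ^ 2 / (2 * α - 1)) * (1 - a) ^ (1 / α - 2) := by rw [hhead, htail_exp]; ring

lemma exists_sum_psiSeq_sq_le (hφ : ∀ i, 0 ≤ φ i) (hs : HasSum φ 1) (hα : 1 / 2 < α)
    (htail : (fun N : ℕ => ∑' i, φ (N + i)) =Θ[atTop] fun N : ℕ => (N : ℝ) ^ (-α)) :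
    ∃ c > 0, ∀ a, 0 ≤ a → a < 1 → ∀ t : Finset ℕ,
      ∑ k ∈ t, psiSeq a φ k ^ 2 ≤ c * (1 - a) ^ (1 / α - 2) := by
  obtain ⟨e, he, c, hc, hintegral⟩ :=
    exists_integral_norm_fourierSeq_psiSeq_sq_le hφ hs hα htail
  refine ⟨2 / e * c, by positivity, fun a ha0 ha1 t => ?_⟩
  have hψ := summable_psiSeq hφ hs ha0 (by rwa [mul_one])
  have hsum := (sum_sq_le_integral_norm_fourierSeq_sq (psiSeq_nonneg hφ ha0) hψ he t).trans
    (hintegral a ha0 ha1)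
  calc ∑ k ∈ t, psiSeq a φ k ^ 2 = 2 / e * (e / 2 * ∑ k ∈ t, psiSeq a φ k ^ 2) := by field_simp
    _ ≤ 2 / e * (c * (1 - a) ^ (1 / α - 2)) := mul_le_mul_of_nonneg_left hsum (by positivity)
    _ = 2 / e * c * (1 - a) ^ (1 / α - 2) := (mul_assoc _ _ _).symm

end Resolvent

section Covariance

variable {Ω : Type*} [MeasurableSpace Ω] {P : Measure Ω}

lemma integral_sum_mul_sq_of_orthonormal {ι : Type*} [DecidableEq ι] {ε : ι → Ω → ℝ}
    {s : Finset ι} (hL2 : ∀ i ∈ s, MemLp (ε i) 2 P)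
    (horth : ∀ i ∈ s, ∀ j ∈ s, ∫ ω, ε i ω * ε j ω ∂P = if i = j then 1 else 0) (u : ι → ℝ) :
    ∫ ω, (∑ i ∈ s, u i * ε i ω) ^ 2 ∂P = ∑ i ∈ s, u i ^ 2 := by
  have hint {i j : ι} (hi : i ∈ s) (hj : j ∈ s) :
      Integrable (fun ω => u i * u j * (ε i ω * ε j ω)) P :=
    ((hL2 i hi).integrable_mul (hL2 j hj)).const_mul _
  calc ∫ ω, (∑ i ∈ s, u i * ε i ω) ^ 2 ∂P
      = ∫ ω, ∑ i ∈ s, ∑ j ∈ s, u i * u j * (ε i ω * ε j ω) ∂P := by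
        simp only [sq, Finset.sum_mul_sum, mul_mul_mul_comm]
    _ = ∑ i ∈ s, ∑ j ∈ s, u i * u j * if i = j then 1 else 0 := by
        rw [integral_finsetSum _ fun i hi => integrable_finsetSum _ fun j hj => hint hi hj]
        refine Finset.sum_congr rfl fun i hi => ?_
        rw [integral_finsetSum _ fun j hj => hint hi hj]
        refine Finset.sum_congr rfl fun j hj => ?_
        rw [integral_const_mul, horth i hi j hj]
    _ = ∑ i ∈ s, u i ^ 2 := by
        refine Finset.sum_congr rfl fun i hi => ?_
        simp only [mul_ite, mul_one, mul_zero, Finset.sum_ite_eq, hi, if_true, sq]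

lemma abs_integral_mul_le_of_integral_sq_le {f g : Ω → ℝ} {B : ℝ} (hf : MemLp f 2 P)
    (hg : MemLp g 2 P) (hfB : ∫ ω, f ω ^ 2 ∂P ≤ B) (hgB : ∫ ω, g ω ^ 2 ∂P ≤ B) :
    |∫ ω, f ω * g ω ∂P| ≤ B := by
  have hamgm (ω : Ω) : |f ω * g ω| ≤ (f ω ^ 2 + g ω ^ 2) / 2 := by
    rw [abs_mul, ← sq_abs (f ω), ← sq_abs (g ω)]
    linarith [two_mul_le_add_sq |f ω| |g ω|]
  calc |∫ ω, f ω * g ω ∂P| ≤ ∫ ω, |f ω * g ω| ∂P := abs_integral_le_integral_abs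
    _ ≤ ∫ ω, (f ω ^ 2 + g ω ^ 2) / 2 ∂P :=
        integral_mono (hf.integrable_mul hg).abs
          ((hf.integrable_sq.add hg.integrable_sq).div_const 2) hamgm
    _ = (∫ ω, f ω ^ 2 ∂P + ∫ ω, g ω ^ 2 ∂P) / 2 := by
        rw [integral_div, integral_add hf.integrable_sq hg.integrable_sq]
    _ ≤ B := by linarith

lemma integral_mul_eq_ite_of_iIndepFun_of_identDistrib {ι : Type*} [DecidableEq ι] {ε : ι → Ω → ℝ}
    {i₀ : ι} (hmeas : ∀ i, AEStronglyMeasurable (ε i) P) (hindep : iIndepFun ε P)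
    (hid : ∀ i, IdentDistrib (ε i) (ε i₀) P P) (hmean : ∫ ω, ε i₀ ω ∂P = 0)
    (hvar : ∫ ω, ε i₀ ω ^ 2 ∂P = 1) (i j : ι) :
    ∫ ω, ε i ω * ε j ω ∂P = if i = j then 1 else 0 := by
  split_ifs with hij
  · subst hij
    simp only [← sq]
    exact ((hid i).comp (measurable_id.pow_const 2)).integral_eq.trans hvar
  · rw [(hindep.indepFun hij).integral_fun_mul_eq_mul_integral (hmeas i) (hmeas j),
      (hid i).integral_eq, hmean, zero_mul]

variable {φ : ℕ → ℝ} {a B s : ℝ} {ε y : ℕ → Ω → ℝ}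

lemma abs_integral_mul_le_of_autoregression (hφ : ∀ i, 0 ≤ φ i) (hφ0 : φ 0 = 0) (hs : HasSum φ s)
    (ha : 0 ≤ a) (has : a * s < 1) (hL2 : ∀ k, MemLp (ε k) 2 P)
    (horth : ∀ i j, ∫ ω, ε i ω * ε j ω ∂P = if i = j then 1 else 0) (hy0 : y 0 = ε 0)
    (hy : ∀ k, 1 ≤ k → ∀ ω, y k ω = ε k ω + ∑ i ∈ Finset.Icc 1 k, a * φ i * y (k - i) ω)
    (hB : ∀ t : Finset ℕ, ∑ j ∈ t, psiSeq a φ j ^ 2 ≤ B) (k k' : ℕ) :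
    |∫ ω, y k ω * y k' ω ∂P| ≤ B := by
  have hconv (k : ℕ) : y k = fun ω => ∑ j ∈ Finset.range (k + 1), psiSeq a φ j * ε (k - j) ω :=
    funext fun ω => eq_sum_psiSeq_of_autoregression (x := fun k => ε k ω) (y := fun k => y k ω)
      hφ hφ0 hs ha has (congrFun hy0 ω) (fun k hk => hy k hk ω) k
  have hy_memLp (k : ℕ) : MemLp (y k) 2 P := by
    rw [hconv]
    exact memLp_finsetSum _ fun j _ => (hL2 _).const_mul _
  have hy_sq (k : ℕ) : ∫ ω, y k ω ^ 2 ∂P ≤ B := by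
    rw [hconv, integral_sum_mul_sq_of_orthonormal fun j _ => hL2 (k - j)]
    · exact hB _
    · intro i hi j hj
      rw [Finset.mem_range, Nat.lt_succ_iff] at hi hj
      simp only [horth, tsub_right_inj hi hj]
  exact abs_integral_mul_le_of_integral_sq_le (hy_memLp k) (hy_memLp k') (hy_sq k) (hy_sq k')

end Covariance

lemma hasSum_of_tsum_ne_zero {ι R : Type*} [AddCommMonoid R] [TopologicalSpace R] {f : ι → R}
    {r : R} (hr : r ≠ 0) (hf : ∑' i, f i = r) : HasSum f r := by
  by_cases hsum : Summable f
  · exact hf ▸ hsum.hasSum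
  · exact absurd (hf.symm.trans (tsum_eq_zero_of_not_summable hsum)) hr

theorem ar_covariance_bound_heavy_tail_high_general
    {Ω : Type*} [MeasurableSpace Ω] (P : Measure Ω)
    (φ : ℕ → ℝ) (hφ : ∀ i, 0 ≤ φ i) (hφ0 : φ 0 = 0) (hφsum : HasSum φ 1)
    (α : ℝ) (hα : 1 / 2 < α)
    (htail : (fun N : ℕ => ∑' i, φ (N + i)) =Θ[atTop] fun N : ℕ => (N : ℝ) ^ (-α)) :
    ∃ c > 0, ∀ a, 0 ≤ a → a < 1 → ∀ ε y : ℕ → Ω → ℝ, (∀ k, MemLp (ε k) 2 P) →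
      (∀ i j, ∫ ω, ε i ω * ε j ω ∂P = if i = j then 1 else 0) → y 0 = ε 0 →
      (∀ k, 1 ≤ k → ∀ ω, y k ω = ε k ω + ∑ i ∈ Finset.Icc 1 k, a * φ i * y (k - i) ω) →
      ∀ k k' : ℕ, |∫ ω, y k ω * y k' ω ∂P| ≤ c * (1 - a) ^ (1 / α - 2) := by
  obtain ⟨c, hc, hbound⟩ := exists_sum_psiSeq_sq_le hφ hφsum hα htail
  refine ⟨c, hc, fun a ha0 ha1 ε y hL2 horth hy0 hy => ?_⟩
  exact abs_integral_mul_le_of_autoregression hφ hφ0 hφsum ha0 (by rwa [mul_one]) hL2 horth hy0 hy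
    (hbound a ha0 ha1)

/-- heavy-tail bound, case `α > 1/2`:
`E[y^n_k y^n_{k'}] ≤ c (1−a_n)^{1/α − 2}`. -/
theorem ar_covariance_bound_heavy_tail_high
    {Ω : Type*} [MeasurableSpace Ω] (P : Measure Ω) [IsProbabilityMeasure P]
    (φ : ℕ → ℝ) (hφnn : ∀ i, 0 ≤ φ i) (hφ0 : φ 0 = 0) (hφsum : ∑' i : ℕ, φ i = 1)
    (K α : ℝ) (hK : 0 < K) (hα0 : 0 < α) (hα1 : α < 1)
    (htail : Tendsto (fun N : ℕ => (N : ℝ) ^ α * ∑' i : ℕ, φ (N + i)) atTop (nhds K))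
    (δ : ℝ) (hδ : δ = K * Real.Gamma (1 - α) / α)
    (a : ℕ → ℝ) (ha : ∀ n, 1 ≤ n → 0 < a n ∧ a n < 1)
    (lam : ℝ) (hlam : 0 < lam)
    (haconv : Tendsto (fun n : ℕ => (n : ℝ) ^ α * (1 - a n)) atTop (nhds (lam * δ)))
    -- the `ε_k` are iid, square integrable, centered with unit variance
    (ε : ℕ → Ω → ℝ) (hεmeas : ∀ k, Measurable (ε k))
    (hεindep : iIndepFun ε P)
    (hεid : ∀ k, Measure.map (ε k) P = Measure.map (ε 0) P)
    (hεL2 : MemLp (ε 0) 2 P)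
    (hεmean : ∫ ω, ε 0 ω ∂P = 0)
    (hεvar : ∫ ω, (ε 0 ω) ^ 2 ∂P = 1)
    (y : ℕ → ℕ → Ω → ℝ)
    (hy0 : ∀ n, y n 0 = ε 0)
    (hyrec : ∀ n k, 1 ≤ k → ∀ ω,
      y n k ω = ε k ω + ∑ i ∈ Finset.Icc 1 k, a n * φ i * y n (k - i) ω)
    (hαhalf : 1 / 2 < α) :
    ∃ c > 0, ∀ n, 1 ≤ n → ∀ k k' : ℕ,
      ∫ ω, y n k ω * y n k' ω ∂P ≤ c * (1 - a n) ^ (1 / α - 2) := by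
  have hid (k : ℕ) : IdentDistrib (ε k) (ε 0) P P :=
    ⟨(hεmeas k).aemeasurable, (hεmeas 0).aemeasurable, hεid k⟩
  obtain ⟨c, hc, hbound⟩ := ar_covariance_bound_heavy_tail_high_general P φ hφnn hφ0
    (hasSum_of_tsum_ne_zero one_ne_zero hφsum) α hαhalf
    (isTheta_rpow_neg_of_tendsto_rpow_mul hK.ne' htail)
  exact ⟨c, hc, fun n hn k k' => (le_abs_self _).trans <|
    hbound (a n) (ha n hn).1.le (ha n hn).2 ε (y n) (fun i => (hid i).symm.memLp_snd hεL2)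
      (integral_mul_eq_ite_of_iIndepFun_of_identDistrib
        (fun i => (hεmeas i).aestronglyMeasurable) hεindep hid hεmean hεvar)
      (hy0 n) (hyrec n) k k'⟩
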